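/- A quasigroup Q is trimedial if and only if it satisfies the single identity ((x·y)·(u·u))·((w·(w·w))·(z·v)) = ((x·u)·(y·u))·((w·z)·((w·w)·v)) for all elements x, y, z, u, v, w of Q. -/

import Mathlib

/-!
Putting `y = u` makes the left factors of the identity agree; cancelling them, and then the right
factors in the general case, splits the identity into

* right semimediality `(x * y) * (u * u) = (x * u) * (y * u)`, and
* the `E`-law `(w * (w * w)) * (z * v) = (w * z) * ((w * w) * v)`.

Both say that certain triples of translations are autotopisms. Write `L`, `R` for the translations
and `s w = w * w`. The argument runs as follows.

*Left semimediality.* Conjugating the `E`-law autotopism by the ones for `R` gives an autotopism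
`(L (w * u), L (s w * u), _)`. Comparing it with `(L (w * u), L (s w * s u), _)` and conjugating,
one finds that `(1, (L v)⁻¹ * L (s v), _)` is an autotopism, which is left semimediality
(`left_of_right_of_ext`).

*Self-duality.* Transporting these nuclear permutations by the autotopisms
`(L u, L u, L (s u))` and `(R u, R u, R (s u))` yields the mirror image of the `E`-law
(`IsESemimedial.ext_dual`), so the hypotheses pass to the opposite quasigroup.

*Symmetry of the medial relation.* Let `M w x y z` mean `(w * x) * (y * z) = (w * y) * (x * z)`.
It holds iff `z` is fixed by the commutator `φ` of `A = (L w)⁻¹ * L x` and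
`B = (L w)⁻¹ * L y`. The `E`-law makes the correction terms `(L v)⁻¹ * L (s v)` central, so `φ` is an
automorphism. Its fixed points form a subquasigroup containing `x`, `y`, and also `w`. Hence `M` is
invariant under exchanging `w` and `x`, and, by duality, under all permutations of its arguments;
moreover it is closed under products in the last argument. As `M` holds whenever two
arguments agree, it holds for four elements out of `a`, `b`, `c`, and thus on their closure.
-/

/-- A quasigroup structure on a type: a binary operation whose left and right
translations are bijections. -/
def IsQuasigroup (Q : Type*) [Mul Q] : Prop :=
  (∀ a : Q, Function.Bijective fun x : Q => a * x) ∧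
  (∀ a : Q, Function.Bijective fun x : Q => x * a)

/-- A quasigroup is trimedial if every subgroupoid generated by three elements is
medial, i.e. satisfies (w·x)·(y·z) = (w·y)·(x·z). -/
def IsTrimedial (Q : Type*) [Mul Q] : Prop :=
  ∀ a b c : Q, ∀ w x y z : Q,
    w ∈ Subsemigroup.closure {a, b, c} → x ∈ Subsemigroup.closure {a, b, c} →
    y ∈ Subsemigroup.closure {a, b, c} → z ∈ Subsemigroup.closure {a, b, c} →
    (w * x) * (y * z) = (w * y) * (x * z)

open Equiv

namespace Trimedial

section Translations

variable {Q : Type*} [Mul Q]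

/-- Left translation `x ↦ a * x` of a quasigroup, as a permutation. -/
noncomputable def L (hQ : IsQuasigroup Q) (a : Q) : Perm Q := Equiv.ofBijective _ (hQ.1 a)

/-- Right translation `x ↦ x * a` of a quasigroup, as a permutation. -/
noncomputable def R (hQ : IsQuasigroup Q) (a : Q) : Perm Q := Equiv.ofBijective _ (hQ.2 a)

@[simp] lemma L_apply (hQ : IsQuasigroup Q) (a x : Q) : L hQ a x = a * x := rfl

@[simp] lemma R_apply (hQ : IsQuasigroup Q) (a x : Q) : R hQ a x = x * a := rfl

lemma mul_left_inj_of (hQ : IsQuasigroup Q) {a x y : Q} (h : a * x = a * y) : x = y :=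
  (hQ.1 a).1 h

lemma mul_right_inj_of (hQ : IsQuasigroup Q) {a x y : Q} (h : x * a = y * a) : x = y :=
  (hQ.2 a).1 h

/-- `(α, β, γ)` is an autotopism of `Q`. -/
def Atp (α β γ : Perm Q) : Prop := ∀ x y, α x * β y = γ (x * y)

lemma Atp.mul {α β γ α' β' γ' : Perm Q} (h : Atp α β γ) (h' : Atp α' β' γ') :
    Atp (α * α') (β * β') (γ * γ') := fun x y => by
  simp only [Perm.mul_apply]
  rw [h, h']

lemma Atp.inv {α β γ : Perm Q} (h : Atp α β γ) : Atp α⁻¹ β⁻¹ γ⁻¹ := fun x y => by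
  rw [Perm.eq_inv_iff_eq, ← h]
  simp

/-- Permutations occurring as second component of an autotopism with trivial first component. -/
def NucR (n : Perm Q) : Prop := ∃ c, Atp 1 n c

/-- Permutations occurring as first component of an autotopism with trivial second component. -/
def NucL (n : Perm Q) : Prop := ∃ c, Atp n 1 c

lemma NucR.mul {m n : Perm Q} (hm : NucR m) (hn : NucR n) : NucR (m * n) := by
  obtain ⟨c, hc⟩ := hm
  obtain ⟨d, hd⟩ := hn
  exact ⟨c * d, by simpa using hc.mul hd⟩

lemma NucR.inv {n : Perm Q} (hn : NucR n) : NucR n⁻¹ := by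
  obtain ⟨d, hd⟩ := hn
  exact ⟨d⁻¹, by simpa using hd.inv⟩

lemma NucR.conj {n α β γ : Perm Q} (hn : NucR n) (h : Atp α β γ) : NucR (β * n * β⁻¹) := by
  obtain ⟨d, hd⟩ := hn
  exact ⟨γ * d * γ⁻¹, by simpa using (h.mul hd).mul h.inv⟩

lemma NucL.conj {n α β γ : Perm Q} (hn : NucL n) (h : Atp α β γ) : NucL (α * n * α⁻¹) := by
  obtain ⟨d, hd⟩ := hn
  exact ⟨γ * d * γ⁻¹, by simpa using (h.mul hd).mul h.inv⟩

/-- The third component of an autotopism `(1, n, c)` is conjugate to `n` under every `L x`. -/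
lemma Atp.third_eq (hQ : IsQuasigroup Q) {n c : Perm Q} (h : Atp 1 n c) (x : Q) :
    c = L hQ x * n * (L hQ x)⁻¹ := by
  rw [eq_mul_inv_iff_mul_eq]
  ext y
  simpa using (h x y).symm

end Translations

/-! ### Left semimediality -/

section LeftSemimedial

variable {Q : Type*} [Mul Q]

theorem left_of_right_of_ext (hQ : IsQuasigroup Q)
    (right : ∀ x y u : Q, (x * y) * (u * u) = (x * u) * (y * u))
    (ext : ∀ w z v : Q, (w * (w * w)) * (z * v) = (w * z) * ((w * w) * v)) (w x y : Q) :
    (w * w) * (x * y) = (w * x) * (w * y) := by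
  have T (w : Q) : Atp (L hQ w) (L hQ (w * w)) (L hQ (w * (w * w))) := fun x y => (ext w x y).symm
  have T' (w u : Q) : Atp (L hQ (w * u)) (L hQ ((w * w) * u))
      (L hQ ((w * (w * w)) * (u * u))) := fun x y => by
    obtain ⟨x, rfl⟩ := (hQ.2 u).2 x
    obtain ⟨y, rfl⟩ := (hQ.2 u).2 y
    simp only [L_apply]
    rw [← right w x u, ← right (w * w) y u, ← right x y u, ← right (w * x), ← ext, right]
  have nuc (v : Q) : NucR ((L hQ v)⁻¹ * L hQ (v * v)) := by
    -- Both permutations are second components of autotopisms with first component `L (v * v)`.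
    have h1 : NucR ((L hQ ((v * v) * v))⁻¹ * L hQ ((v * v) * (v * v))) :=
      ⟨_, by simpa using (T' v v).inv.mul (T (v * v))⟩
    have e (z : Q) : L hQ ((v * v) * z) = L hQ ((v * v) * ((v * v) * (v * v))) * L hQ z *
        (L hQ ((v * v) * (v * v)))⁻¹ := by
      rw [eq_mul_inv_iff_mul_eq]
      ext t
      exact (ext (v * v) z t).symm
    have e' (a b : Q) : (L hQ ((v * v) * a))⁻¹ * L hQ ((v * v) * b) =
        L hQ ((v * v) * (v * v)) * ((L hQ a)⁻¹ * L hQ b) * (L hQ ((v * v) * (v * v)))⁻¹ := by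
      rw [e a, e b]
      group
    rw [e'] at h1
    have h2 := h1.conj (T (v * v)).inv
    convert h2 using 1
    group
  obtain ⟨c, hc⟩ := nuc w
  have h := (T w).mul hc.inv
  have e : ∀ x y, (w * x) * (w * y) = (L hQ (w * (w * w)) * c⁻¹) (x * y) := fun x y => by
    rw [← h]
    simp
  have e2 : ∀ t, (L hQ (w * (w * w)) * c⁻¹) t = (w * w) * t := fun t => by
    obtain ⟨t, rfl⟩ := (hQ.1 w).2 t
    exact (e w t).symm
  rw [e, e2]

end LeftSemimedial

/-- Quasigroups that are left and right semimedial and satisfy the `E`-law `ext`. -/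
structure IsESemimedial (Q : Type*) [Mul Q] : Prop where
  quasi : IsQuasigroup Q
  left : ∀ w x y : Q, (w * w) * (x * y) = (w * x) * (w * y)
  right : ∀ x y u : Q, (x * y) * (u * u) = (x * u) * (y * u)
  ext : ∀ w z v : Q, (w * (w * w)) * (z * v) = (w * z) * ((w * w) * v)

/-- The relation `(w * x) * (y * z) = (w * y) * (x * z)`. -/
def Med {Q : Type*} [Mul Q] (w x y z : Q) : Prop := (w * x) * (y * z) = (w * y) * (x * z)

namespace IsESemimedial

variable {Q : Type*} [Mul Q]

lemma atpL (h : IsESemimedial Q) (u : Q) :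
    Atp (L h.quasi u) (L h.quasi u) (L h.quasi (u * u)) := fun x y => (h.left u x y).symm

lemma atpR (h : IsESemimedial Q) (u : Q) :
    Atp (R h.quasi u) (R h.quasi u) (R h.quasi (u * u)) := fun x y => (h.right x y u).symm

lemma atp_ext (h : IsESemimedial Q) (w : Q) :
    Atp (L h.quasi w) (L h.quasi (w * w)) (L h.quasi (w * (w * w))) :=
  fun x y => (h.ext w x y).symm

/-- The permutation `(L w)⁻¹ * L (w * w)`, a translation by a central element. -/
noncomputable def N (h : IsESemimedial Q) (w : Q) : Perm Q :=
  (L h.quasi w)⁻¹ * L h.quasi (w * w)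

lemma nucR_N (h : IsESemimedial Q) (w : Q) : NucR (h.N w) :=
  ⟨_, by simpa [N] using (h.atpL w).inv.mul (h.atp_ext w)⟩

/-! ### Self-duality -/

lemma ext_dual (h : IsESemimedial Q) (w y z : Q) :
    (y * z) * ((w * w) * w) = (y * (w * w)) * (z * w) := by
  have hM : NucR (L h.quasi (w * w) * (L h.quasi w)⁻¹) := by
    convert (h.nucR_N w).conj (h.atpL w) using 1
    simp [N]
  -- `(M, M * (N (w * w))⁻¹, 1)` is an autotopism for `M = L (w * w) * (L w)⁻¹`, and its second
  -- component is nuclear, so `M` is nuclear on the other side too.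
  have hM' : NucL (L h.quasi (w * w) * (L h.quasi w)⁻¹) := by
    have h1 := (h.atpL (w * w)).mul (h.atpL w).inv
    obtain ⟨c, hc⟩ := h.nucR_N (w * w)
    obtain ⟨d, hd⟩ := hM.mul (h.nucR_N (w * w)).inv
    have h2 := (h1.mul hc.inv).mul hd.inv
    rw [mul_inv_cancel, inv_one, mul_one, mul_one] at h2
    exact ⟨_, h2⟩
  -- `Y` is the nuclear permutation that sends `w` to `w * w`.
  obtain ⟨Y, hY⟩ : ∃ Y, Y = (R h.quasi w)⁻¹ * (L h.quasi (w * w) * (L h.quasi w)⁻¹) *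
    R h.quasi w := ⟨_, rfl⟩
  have hYR : NucR Y := by
    convert hM.conj (h.atpR w).inv using 1
    simp [hY]
  have hYL : NucL Y := by
    convert hM'.conj (h.atpR w).inv using 1
    simp [hY]
  have hYw : Y w = w * w := by
    rw [hY, Perm.mul_apply, Perm.mul_apply, Perm.inv_eq_iff_eq]
    have : (L h.quasi w)⁻¹ (w * w) = w := by rw [Perm.inv_eq_iff_eq]; rfl
    rw [R_apply, Perm.mul_apply, this]
    rfl
  obtain ⟨X, hX⟩ := hYR
  have hXL : NucL X := by
    rw [hX.third_eq h.quasi w]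
    exact hYL.conj (h.atpL w)
  obtain ⟨c, hc⟩ : NucL ((R h.quasi w)⁻¹ * X * R h.quasi w) := by
    simpa using hXL.conj (h.atpR w).inv
  have h3 := (h.atpR w).mul hc
  have h4 : ∀ y z, (y * (w * w)) * (z * w) = (R h.quasi (w * w) * c) (y * z) := fun y z => by
    rw [← h3 y z]
    have := hX y w
    rw [hYw] at this
    simp only [Perm.mul_apply, R_apply, Perm.one_apply] at this ⊢
    rw [this, ← R_apply h.quasi w ((R h.quasi w)⁻¹ _), ← Perm.mul_apply, mul_inv_cancel,
      Perm.one_apply]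
  have h5 : ∀ t, (R h.quasi (w * w) * c) t = t * ((w * w) * w) := fun t => by
    obtain ⟨t, rfl⟩ := (h.quasi.2 w).2 t
    rw [← h4]
    exact h.right t (w * w) w
  rw [h4, h5]

lemma op (h : IsESemimedial Q) : IsESemimedial Qᵐᵒᵖ where
  quasi := by
    refine ⟨fun a => ?_, fun a => ?_⟩
    · exact (MulOpposite.opEquiv.bijective.comp (h.quasi.2 a.unop)).comp
        MulOpposite.opEquiv.symm.bijective
    · exact (MulOpposite.opEquiv.bijective.comp (h.quasi.1 a.unop)).comp
        MulOpposite.opEquiv.symm.bijective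
  left w x y := MulOpposite.unop_injective (h.right _ _ _)
  right x y u := MulOpposite.unop_injective (h.left _ _ _)
  ext w z v := MulOpposite.unop_injective (h.ext_dual _ _ _)

/-! ### The automorphisms measuring mediality -/

/-- The permutation whose fixed points are the `z` with `Med w x y z`: the commutator of
`(L w)⁻¹ * L x` and `(L w)⁻¹ * L y`. -/
noncomputable def phi (h : IsESemimedial Q) (w x y : Q) : Perm Q :=
  ((L h.quasi x)⁻¹ * L h.quasi w) * ((L h.quasi y)⁻¹ * L h.quasi x) *
    ((L h.quasi w)⁻¹ * L h.quasi y)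

lemma L_mul (h : IsESemimedial Q) (w x : Q) :
    L h.quasi (w * x) = L h.quasi (w * w) * L h.quasi x * (L h.quasi w)⁻¹ := by
  rw [eq_mul_inv_iff_mul_eq]
  ext t
  exact (h.left w x t).symm

lemma phi_eq_iff (h : IsESemimedial Q) (w x y z : Q) : h.phi w x y z = z ↔ Med w x y z := by
  have e : Med w x y z ↔ L h.quasi (w * x) (L h.quasi y z) = L h.quasi (w * y) (L h.quasi x z) :=
    Iff.rfl
  rw [e, h.L_mul w x, h.L_mul w y, phi]
  simp only [Perm.mul_apply, Perm.inv_eq_iff_eq, EmbeddingLike.apply_eq_iff_eq]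
  rw [← Perm.eq_inv_iff_eq, Perm.inv_eq_iff_eq]

lemma commute_N (h : IsESemimedial Q) (w x y : Q) :
    Commute (h.N w) ((L h.quasi x)⁻¹ * L h.quasi y) := by
  obtain ⟨c, hc⟩ := h.nucR_N w
  have h1 := (hc.third_eq h.quasi x).symm.trans (hc.third_eq h.quasi y)
  rw [eq_mul_inv_iff_mul_eq] at h1
  have h2 := congrArg (fun t => (L h.quasi x)⁻¹ * t) h1
  simpa [Commute, SemiconjBy, mul_assoc] using h2

lemma L_sq (h : IsESemimedial Q) (w x : Q) :
    (L h.quasi (w * w))⁻¹ * L h.quasi (x * x) =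
      ((L h.quasi w)⁻¹ * L h.quasi x) * ((h.N w)⁻¹ * h.N x) := by
  have e1 : L h.quasi (w * w) = L h.quasi w * h.N w := by simp [N]
  have e2 : L h.quasi (x * x) = L h.quasi x * h.N x := by simp [N]
  have c := (h.commute_N w w x).inv_left.eq
  rw [e1, e2, mul_inv_rev, ← mul_assoc _ (h.N w)⁻¹, ← c]
  group

lemma phi_mul (h : IsESemimedial Q) (w x y a b : Q) :
    h.phi w x y (a * b) = h.phi w x y a * h.phi w x y b := by
  have h1 := (((h.atpL x).inv.mul (h.atpL w)).mul ((h.atpL y).inv.mul (h.atpL x))).mul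
    ((h.atpL w).inv.mul (h.atpL y))
  have e : h.phi w x y = ((L h.quasi (x * x))⁻¹ * L h.quasi (w * w)) *
      ((L h.quasi (y * y))⁻¹ * L h.quasi (x * x)) *
      ((L h.quasi (w * w))⁻¹ * L h.quasi (y * y)) := by
    have cN (u v : Q) : Commute (h.N u) (h.N v) := h.commute_N u v (v * v)
    have c1 (u v : Q) : Commute ((h.N u)⁻¹ * h.N v) ((L h.quasi y)⁻¹ * L h.quasi x) :=
      (h.commute_N u y x).inv_left.mul_left (h.commute_N v y x)
    have c2 (u v : Q) : Commute ((h.N u)⁻¹ * h.N v) ((L h.quasi w)⁻¹ * L h.quasi y) :=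
      (h.commute_N u w y).inv_left.mul_left (h.commute_N v w y)
    have key : ((h.N x)⁻¹ * h.N w) * ((h.N y)⁻¹ * h.N x) * ((h.N w)⁻¹ * h.N y) = 1 := by
      have k1 : (h.N y)⁻¹ * h.N x = h.N x * (h.N y)⁻¹ := (cN y x).inv_left.eq
      have k2 : (h.N x)⁻¹ * h.N w = h.N w * (h.N x)⁻¹ := (cN x w).inv_left.eq
      have k3 : (h.N w)⁻¹ * h.N y = h.N y * (h.N w)⁻¹ := (cN w y).inv_left.eq
      rw [k1, k2, k3]
      group
    rw [h.L_sq, h.L_sq, h.L_sq, phi]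
    generalize (L h.quasi x)⁻¹ * L h.quasi w = P1 at *
    have d1 := (c1 x w).eq
    have d2 := (c2 x w).eq
    have d3 := (c2 y x).eq
    generalize (L h.quasi y)⁻¹ * L h.quasi x = P2 at *
    generalize (L h.quasi w)⁻¹ * L h.quasi y = P3 at *
    generalize (h.N x)⁻¹ * h.N w = n1 at *
    generalize (h.N y)⁻¹ * h.N x = n2 at *
    generalize (h.N w)⁻¹ * h.N y = n3 at *
    symm
    calc P1 * n1 * (P2 * n2) * (P3 * n3) = P1 * (n1 * P2) * (n2 * P3) * n3 := by
          simp only [mul_assoc]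
      _ = P1 * P2 * (n1 * P3) * n2 * n3 := by rw [d1, d3]; simp only [mul_assoc]
      _ = P1 * P2 * P3 * (n1 * n2 * n3) := by rw [d2]; simp only [mul_assoc]
      _ = P1 * P2 * P3 := by rw [key, mul_one]
  have h2 := h1 a b
  rw [← e] at h2
  exact h2.symm

lemma phi_swap (h : IsESemimedial Q) (w x y z : Q) :
    h.phi x w y z = z ↔ h.phi w x y (((L h.quasi x)⁻¹ * L h.quasi w) z) =
      ((L h.quasi x)⁻¹ * L h.quasi w) z := by
  have e : h.phi x w y = ((L h.quasi x)⁻¹ * L h.quasi w)⁻¹ * (h.phi w x y)⁻¹ *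
      ((L h.quasi x)⁻¹ * L h.quasi w) := by
    simp only [phi]
    group
  rw [e, Perm.mul_apply, Perm.mul_apply, Perm.inv_eq_iff_eq, Perm.inv_eq_iff_eq]
  exact eq_comm

lemma phi_second (h : IsESemimedial Q) (w x y : Q) : h.phi w x y x = x :=
  (h.phi_eq_iff w x y x).2 (h.right w y x).symm

lemma phi_third (h : IsESemimedial Q) (w x y : Q) : h.phi w x y y = y :=
  (h.phi_eq_iff w x y y).2 (h.right w x y)

/-- As `phi x w y` fixes `y`, the permutation `phi w x y` fixes the solution `p` of `x * p = w * y`.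
It then fixes `w * y`, hence `w`. -/
lemma phi_first (h : IsESemimedial Q) (w x y : Q) : h.phi w x y w = w := by
  have h1 := (h.phi_swap w x y y).1 (h.phi_third x w y)
  obtain ⟨p, hp⟩ : ∃ p, p = ((L h.quasi x)⁻¹ * L h.quasi w) y := ⟨_, rfl⟩
  rw [← hp] at h1
  have h2 : x * p = w * y := by
    rw [Perm.mul_apply, Perm.eq_inv_iff_eq] at hp
    exact hp
  have h3 := h.phi_mul w x y w y
  rw [← h2, phi_mul, h1, phi_second, phi_third, h2] at h3
  exact (mul_right_inj_of h.quasi h3).symm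

/-! ### Symmetry of the medial relation -/

lemma swap12 (h : IsESemimedial Q) {w x y z : Q} (hm : Med w x y z) : Med x w y z := by
  rw [← phi_eq_iff h] at hm ⊢
  rw [phi_swap]
  obtain ⟨p, hp⟩ : ∃ p, p = ((L h.quasi x)⁻¹ * L h.quasi w) z := ⟨_, rfl⟩
  rw [← hp]
  have h2 : x * p = w * z := by
    rw [Perm.mul_apply, Perm.eq_inv_iff_eq] at hp
    exact hp
  have h3 := h.phi_mul w x y x p
  rw [h2, phi_mul, phi_first, phi_second, hm, ← h2] at h3
  exact (mul_left_inj_of h.quasi h3).symm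

lemma swap23 {w x y z : Q} (hm : Med w x y z) : Med w y x z := Eq.symm hm

lemma swap34 (h : IsESemimedial Q) {w x y z : Q} (hm : Med w x y z) : Med w x z y := by
  have h1 : Med (MulOpposite.op z) (MulOpposite.op y) (MulOpposite.op x) (MulOpposite.op w) :=
    congrArg MulOpposite.op hm
  exact congrArg MulOpposite.unop (h.op.swap12 h1)

lemma med_mul (h : IsESemimedial Q) {w x y z z' : Q} (hm : Med w x y z) (hm' : Med w x y z') :
    Med w x y (z * z') := by
  rw [← phi_eq_iff h] at *
  rw [phi_mul, hm, hm']

lemma med_closure (h : IsESemimedial Q) {s : Set Q} {w x y z : Q}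
    (hs : ∀ g ∈ s, Med w x y g) (hz : z ∈ Subsemigroup.closure s) : Med w x y z := by
  induction hz using Subsemigroup.closure_induction with
  | mem g hg => exact hs g hg
  | mul a b _ _ ha hb => exact h.med_mul ha hb

lemma med_three (h : IsESemimedial Q) (a b c : Q) : ∀ w ∈ ({a, b, c} : Set Q),
    ∀ x ∈ ({a, b, c} : Set Q), ∀ y ∈ ({a, b, c} : Set Q), ∀ z ∈ ({a, b, c} : Set Q),
    Med w x y z := by
  have e34 (p q r : Q) : Med p q r r := h.right p q r
  have e24 (p q r : Q) : Med p r q r := swap23 (e34 p q r)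
  have e14 (p q r : Q) : Med r p q r := h.swap12 (e24 p q r)
  have e23 (p q r : Q) : Med p r r q := rfl
  have e13 (p q r : Q) : Med r p r q := h.swap12 (e23 p q r)
  have e12 (p q r : Q) : Med r r p q := swap23 (e13 p q r)
  simp only [Set.mem_insert_iff, Set.mem_singleton_iff]
  -- Among four elements of `{a, b, c}` two agree.
  rintro w (rfl | rfl | rfl) x (rfl | rfl | rfl) y (rfl | rfl | rfl) z (rfl | rfl | rfl) <;>
    first
    | exact e34 _ _ _ | exact e24 _ _ _ | exact e14 _ _ _
    | exact e23 _ _ _ | exact e13 _ _ _ | exact e12 _ _ _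

lemma isTrimedial (h : IsESemimedial Q) : IsTrimedial Q := by
  intro a b c w x y z hw hx hy hz
  have h1 : ∀ w ∈ ({a, b, c} : Set Q), ∀ x ∈ ({a, b, c} : Set Q), ∀ y ∈ ({a, b, c} : Set Q),
      Med w x y z := fun w hw x hx y hy =>
    h.med_closure (h.med_three a b c w hw x hx y hy) hz
  have h2 : ∀ w ∈ ({a, b, c} : Set Q), ∀ x ∈ ({a, b, c} : Set Q), Med w x y z :=
    fun w hw x hx => h.swap34 (h.med_closure (fun g hg => h.swap34 (h1 w hw x hx g hg)) hy)
  have h3 : ∀ w ∈ ({a, b, c} : Set Q), Med w x y z := fun w hw =>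
    swap23 (h.swap34 (h.med_closure (fun g hg => h.swap34 (swap23 (h2 w hw g hg))) hx))
  exact h.swap12 (swap23 (h.swap34
    (h.med_closure (fun g hg => h.swap34 (swap23 (h.swap12 (h3 g hg)))) hw)))

end IsESemimedial

end Trimedial

theorem stmt_4 {Q : Type*} [Mul Q] (hQ : IsQuasigroup Q) :
    IsTrimedial Q ↔
      ∀ x y z u v w : Q,
        ((x * y) * (u * u)) * ((w * (w * w)) * (z * v)) =
          ((x * u) * (y * u)) * ((w * z) * ((w * w) * v)) := by
  constructor
  · intro h x y z u v w
    have m1 : (x * y) * (u * u) = (x * u) * (y * u) := by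
      apply h x y u <;> exact Subsemigroup.subset_closure (by simp)
    have m2 : (w * (w * w)) * (z * v) = (w * z) * ((w * w) * v) := by
      have hw : w ∈ Subsemigroup.closure ({w, z, v} : Set Q) :=
        Subsemigroup.subset_closure (by simp)
      exact h w z v _ _ _ _ hw (mul_mem hw hw) (Subsemigroup.subset_closure (by simp))
        (Subsemigroup.subset_closure (by simp))
    rw [m1, m2]
  · intro h
    have ext (w z v : Q) : (w * (w * w)) * (z * v) = (w * z) * ((w * w) * v) :=
      (hQ.1 _).1 (h w w z w v w)
    have right (x y u : Q) : (x * y) * (u * u) = (x * u) * (y * u) := by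
      have := h x y u u u u
      rw [ext] at this
      exact (hQ.2 _).1 this
    exact Trimedial.IsESemimedial.isTrimedial
      ⟨hQ, Trimedial.left_of_right_of_ext hQ right ext, right, ext⟩
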